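/- For any two words X and Y, the following are equivalent: (i) X ∼ Y; (ii) there is a sequence of swaps between X and Y in which every swap is of type (U, D) for some upper prime U and some lower prime D. -/

import Mathlib

/-!
For (ii) ⇒ (i), a single swap changes a word by an element `W₁(FG - GF)W₂` of `𝒥`.

For (i) ⇒ (ii), the words reachable from each other by swaps of an upper with a lower prime form the
classes of a congruence `primeSwapCon` on the free monoid. Sending each word to its class gives an
algebra map from `𝒜` to the monoid algebra of the quotient monoid, in which distinct classes stay
distinct. This map kills `𝒥` as soon as any two balanced words commute up to such swaps
(`balanced_comm`), and then `X ∼ Y` forces the classes of `X` and `Y` to agree.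

The heart is `balanced_comm`, by induction on the total length of `F` and `G`. If one of them is a
product of shorter balanced words, commute factor by factor. Otherwise both are prime, hence upper
or lower (`IsPrimeWord.upper_or_lower`). If they are of opposite kind they may be swapped directly.
If they are of the same kind, write them as `aAb` and `aBb` with `{a, b} = {L, R}` and `A`, `B`
balanced. The middle `ba` of `aA(ba)Bb` is itself balanced, so by induction
`aA(ba)Bb ∼ aAB(ba)b ∼ aBA(ba)b ∼ aB(ba)Ab`.
-/

/-- A word is a finite sequence of letters; the letter `L` is `false`, the letter `R` is `true`. -/
abbrev Word := List Bool

/-- A word is balanced if it contains equally many `L`s and `R`s. -/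
def BalancedWord (w : Word) : Prop := w.count true = w.count false

/-- The element of the free `ℂ`-algebra on two generators corresponding to a word. -/
noncomputable def toA (w : Word) : FreeAlgebra ℂ Bool :=
  (w.map (FreeAlgebra.ι ℂ)).prod

/-- The set `S = {FG - GF : F, G nonempty balanced words}`. -/
def Sset : Set (FreeAlgebra ℂ Bool) :=
  {x | ∃ F G : Word, F ≠ [] ∧ G ≠ [] ∧ BalancedWord F ∧ BalancedWord G ∧
    x = toA F * toA G - toA G * toA F}

/-- The two-sided ideal `𝒥` generated by `S`. -/
noncomputable def Jideal : TwoSidedIdeal (FreeAlgebra ℂ Bool) := TwoSidedIdeal.span Sset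

/-- `X ∼ Y` iff `X - Y ∈ 𝒥`. -/
def WEquiv (X Y : Word) : Prop := toA X - toA Y ∈ Jideal

/-- Words `X` and `Y` are related by a swap of type `(F, G)`. -/
def SwapOfType (F G X Y : Word) : Prop :=
  ∃ W₁ W₂ : Word,
    (X = W₁ ++ F ++ G ++ W₂ ∧ Y = W₁ ++ G ++ F ++ W₂) ∨
    (X = W₁ ++ G ++ F ++ W₂ ∧ Y = W₁ ++ F ++ G ++ W₂)

/-- Words `X` and `Y` are related by a swap. -/
def RelatedBySwap (X Y : Word) : Prop :=
  ∃ F G : Word, F ≠ [] ∧ G ≠ [] ∧ BalancedWord F ∧ BalancedWord G ∧ SwapOfType F G X Y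

/-- The `k`-th elevation of a word: number of `R`s minus number of `L`s among the
first `k` letters. -/
def elev (w : Word) (k : ℕ) : ℤ :=
  ((w.take k).count true : ℤ) - ((w.take k).count false : ℤ)

/-- The elevation multiset `E(W) = {e_k(W) : 0 ≤ k ≤ n}`. -/
def elevMultiset (w : Word) : Multiset ℤ :=
  (Multiset.range (w.length + 1)).map (elev w)

/-- A word is prime if it is nonempty, balanced, and cannot be written as the
product of two nonempty balanced words. -/
def IsPrimeWord (w : Word) : Prop :=
  w ≠ [] ∧ BalancedWord w ∧
    ¬ ∃ u v : Word, u ≠ [] ∧ v ≠ [] ∧ BalancedWord u ∧ BalancedWord v ∧ w = u ++ v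

/-- An upper prime: a prime word with `e_k > 0` for `1 ≤ k ≤ n - 1`. -/
def UpperPrime (w : Word) : Prop :=
  IsPrimeWord w ∧ ∀ k, 1 ≤ k → k ≤ w.length - 1 → 0 < elev w k

/-- A lower prime: a prime word with `e_k < 0` for `1 ≤ k ≤ n - 1`. -/
def LowerPrime (w : Word) : Prop :=
  IsPrimeWord w ∧ ∀ k, 1 ≤ k → k ≤ w.length - 1 → elev w k < 0

/-- A word is reduced if it contains no contiguous subword `UD` with `U` an
upper prime and `D` a lower prime. -/
def Reduced (W : Word) : Prop :=
  ¬ ∃ U D W₁ W₂ : Word, UpperPrime U ∧ LowerPrime D ∧ W = W₁ ++ U ++ D ++ W₂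

/-- Alphabetical (lexicographic) order on words, with `L < R`. -/
def WordLt (X Y : Word) : Prop := List.Lex (· < ·) X Y

/-! ### Sequences of swaps of upper with lower primes -/

/-- One swap of an upper prime with a lower prime. -/
def PrimeSwap (Z₁ Z₂ : Word) : Prop :=
  ∃ U D : Word, UpperPrime U ∧ LowerPrime D ∧ SwapOfType U D Z₁ Z₂

/-- Words connected by a sequence of swaps of upper with lower primes. -/
def PrimeSwaps : Word → Word → Prop := Relation.ReflTransGen PrimeSwap

theorem PrimeSwap.symm {X Y : Word} (h : PrimeSwap X Y) : PrimeSwap Y X := by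
  obtain ⟨U, D, hU, hD, W₁, W₂, h⟩ := h
  exact ⟨U, D, hU, hD, W₁, W₂, h.symm.imp And.symm And.symm⟩

theorem PrimeSwap.context {X Y : Word} (h : PrimeSwap X Y) (P Q : Word) :
    PrimeSwap (P ++ X ++ Q) (P ++ Y ++ Q) := by
  obtain ⟨U, D, hU, hD, W₁, W₂, h⟩ := h
  refine ⟨U, D, hU, hD, P ++ W₁, W₂ ++ Q, ?_⟩
  rcases h with ⟨rfl, rfl⟩ | ⟨rfl, rfl⟩ <;> simp

theorem PrimeSwaps.symm {X Y : Word} (h : PrimeSwaps X Y) : PrimeSwaps Y X :=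
  have : Std.Symm PrimeSwap := ⟨fun _ _ h => h.symm⟩
  Relation.ReflTransGen.stdSymm.symm _ _ h

theorem PrimeSwaps.trans {X Y Z : Word} (h : PrimeSwaps X Y) (h' : PrimeSwaps Y Z) :
    PrimeSwaps X Z :=
  Relation.ReflTransGen.trans h h'

theorem PrimeSwaps.context {X Y : Word} (h : PrimeSwaps X Y) (P Q : Word) :
    PrimeSwaps (P ++ X ++ Q) (P ++ Y ++ Q) :=
  Relation.ReflTransGen.lift (fun Z => P ++ Z ++ Q) (fun _ _ h => PrimeSwap.context h P Q) _ _ h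

/-! ### Prime words -/

theorem elev_succ (w : Word) (k : ℕ) (hk : k < w.length) :
    elev w (k + 1) = elev w k + (if w[k] = true then 1 else -1) := by
  unfold elev
  rw [List.take_succ_eq_append_getElem hk, List.count_append, List.count_append]
  cases w[k] <;> simp <;> ring

theorem IsPrimeWord.elev_ne_zero {w : Word} (h : IsPrimeWord w) (k : ℕ) (h1 : 1 ≤ k)
    (h2 : k < w.length) : elev w k ≠ 0 := by
  intro h0
  obtain ⟨hne, hb, hp⟩ := h
  have hbt : BalancedWord (w.take k) := by
    unfold elev at h0
    unfold BalancedWord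
    omega
  refine hp ⟨w.take k, w.drop k, ?_, ?_, hbt, ?_, (List.take_append_drop k w).symm⟩
  · intro h
    have := congrArg List.length h
    simp only [List.length_take, List.length_nil] at this
    omega
  · intro h
    have := congrArg List.length h
    simp only [List.length_drop, List.length_nil] at this
    omega
  · have ht : w.count true = (w.take k).count true + (w.drop k).count true := by
      rw [← List.count_append, List.take_append_drop]
    have hf : w.count false = (w.take k).count false + (w.drop k).count false := by
      rw [← List.count_append, List.take_append_drop]
    unfold BalancedWord at *
    omega

/-- The elevation changes by one at each step and never vanishes strictly inside a prime word,
so its sign there is the one fixed by the first letter. -/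
theorem IsPrimeWord.upper_or_lower {w : Word} (h : IsPrimeWord w) :
    (UpperPrime w ∧ w.head? = some true) ∨ (LowerPrime w ∧ w.head? = some false) := by
  have hz := h.elev_ne_zero
  match w, h, hz with
  | [], h, _ => exact absurd rfl h.1
  | true :: t, h, hz =>
    refine Or.inl ⟨⟨h, fun k h1 => ?_⟩, rfl⟩
    induction k, h1 using Nat.le_induction with
    | base => intro; simp [elev]
    | succ k hk ih =>
      intro h2
      simp only [List.length_cons] at h2 ih
      have := hz (k + 1) (by omega) (by simp; omega)
      have h3 := ih (by omega)
      have h4 := elev_succ (true :: t) k (by simp; omega)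
      split_ifs at h4 <;> omega
  | false :: t, h, hz =>
    refine Or.inr ⟨⟨h, fun k h1 => ?_⟩, rfl⟩
    induction k, h1 using Nat.le_induction with
    | base => intro; simp [elev]
    | succ k hk ih =>
      intro h2
      simp only [List.length_cons] at h2 ih
      have := hz (k + 1) (by omega) (by simp; omega)
      have h3 := ih (by omega)
      have h4 := elev_succ (false :: t) k (by simp; omega)
      split_ifs at h4 <;> omega

/-- A prime word has opposite first and last letters: the elevation has the same sign after the
first letter and before the last one. -/
theorem IsPrimeWord.exists_core {w : Word} (h : IsPrimeWord w) {a : Bool}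
    (ha : w.head? = some a) : ∃ A : Word, BalancedWord A ∧ w = a :: (A ++ [!a]) := by
  have hul := h.upper_or_lower
  obtain ⟨hne, hb, -⟩ := h
  obtain ⟨t, rfl⟩ : ∃ t, w = a :: t := by
    cases w with
    | nil => simp at ha
    | cons x t => simp at ha; exact ⟨t, by rw [ha]⟩
  rcases List.eq_nil_or_concat t with rfl | ⟨A, b, rfl⟩
  · exfalso; cases a <;> simp [BalancedWord] at hb
  · have hlast : b = !a := by
      rcases hul with ⟨hu, h1⟩ | ⟨hu, h1⟩ <;> simp at h1 <;> subst h1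
      · have := hu.2 (A.length + 1) (by omega) (by simp)
        simp [elev, BalancedWord] at this hb
        cases b
        · rfl
        · simp at hb; omega
      · have := hu.2 (A.length + 1) (by omega) (by simp)
        simp [elev, BalancedWord] at this hb
        cases b
        · simp at hb; omega
        · rfl
    subst hlast
    refine ⟨A, ?_, by simp⟩
    cases a <;> simp [BalancedWord] at hb ⊢ <;> omega

/-! ### Commutation of balanced words -/

/-- Balanced words commute up to swaps of upper with lower primes. -/
theorem balanced_comm (F G : Word) (hF : BalancedWord F) (hG : BalancedWord G) :
    PrimeSwaps (F ++ G) (G ++ F) := by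
  induction hn : F.length + G.length using Nat.strong_induction_on generalizing F G with
  | _ n ih =>
  subst hn
  by_cases hF0 : F = []
  · subst hF0; rw [List.append_nil, List.nil_append]; exact Relation.ReflTransGen.refl
  by_cases hG0 : G = []
  · subst hG0; rw [List.append_nil, List.nil_append]; exact Relation.ReflTransGen.refl
  by_cases hFp : IsPrimeWord F
  swap
  · obtain ⟨u, v, hu, hv, bu, bv, rfl⟩ : ∃ u v : Word, u ≠ [] ∧ v ≠ [] ∧ BalancedWord u ∧
        BalancedWord v ∧ F = u ++ v := by
      by_contra hc; exact hFp ⟨hF0, hF, hc⟩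
    have lu := List.length_pos_iff.2 hu
    have lv := List.length_pos_iff.2 hv
    have h1 := (ih _ (by simp; omega) v G bv hG rfl).context u []
    have h2 := (ih _ (by simp; omega) u G bu hG rfl).context [] v
    simp only [List.append_nil, List.nil_append, List.append_assoc] at h1 h2 ⊢
    exact h1.trans h2
  by_cases hGp : IsPrimeWord G
  swap
  · obtain ⟨u, v, hu, hv, bu, bv, rfl⟩ : ∃ u v : Word, u ≠ [] ∧ v ≠ [] ∧ BalancedWord u ∧
        BalancedWord v ∧ G = u ++ v := by
      by_contra hc; exact hGp ⟨hG0, hG, hc⟩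
    have lu := List.length_pos_iff.2 hu
    have lv := List.length_pos_iff.2 hv
    have h1 := (ih _ (by simp; omega) F u hF bu rfl).context [] v
    have h2 := (ih _ (by simp; omega) F v hF bv rfl).context u []
    simp only [List.append_nil, List.nil_append, List.append_assoc] at h1 h2 ⊢
    exact h1.trans h2
  have same : ∀ a, F.head? = some a → G.head? = some a → PrimeSwaps (F ++ G) (G ++ F) := by
    intro a ha ha'
    obtain ⟨A, bA, rfl⟩ := hFp.exists_core ha
    obtain ⟨B, bB, rfl⟩ := hGp.exists_core ha'
    have bm : BalancedWord [!a, a] := by cases a <;> rfl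
    have h1 := (ih _ (by simp; omega) [!a, a] B bm bB rfl).context (a :: A) [!a]
    have h2 := (ih _ (by simp; omega) A B bA bB rfl).context [a] [!a, a, !a]
    have h3 := (ih _ (by simp) A [!a, a] bA bm rfl).context (a :: B) [!a]
    simp only [List.append_assoc, List.cons_append, List.nil_append] at h1 h2 h3 ⊢
    exact (h1.trans h2).trans h3
  rcases hFp.upper_or_lower with ⟨uF, hF1⟩ | ⟨uF, hF1⟩ <;>
    rcases hGp.upper_or_lower with ⟨uG, hG1⟩ | ⟨uG, hG1⟩
  · exact same _ hF1 hG1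
  · exact .single ⟨F, G, uF, uG, [], [], Or.inl (by simp)⟩
  · exact .single ⟨G, F, uG, uF, [], [], Or.inr (by simp)⟩
  · exact same _ hF1 hG1

/-! ### Passage to the monoid algebra -/

/-- `PrimeSwaps` as a congruence on the free monoid, whose elements are lists of letters. -/
def primeSwapCon : Con (FreeMonoid Bool) where
  r X Y := PrimeSwaps X.toList Y.toList
  iseqv := ⟨fun _ => Relation.ReflTransGen.refl, PrimeSwaps.symm, PrimeSwaps.trans⟩
  mul' {a b c d} h h' := by
    have h1 := PrimeSwaps.context h [] c.toList
    have h2 := PrimeSwaps.context h' b.toList []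
    simp only [List.append_nil, List.nil_append] at h1 h2
    simpa using h1.trans h2

/-- The algebra map from `𝒜` to the monoid algebra of words modulo prime swaps. -/
noncomputable def toQuot : FreeAlgebra ℂ Bool →ₐ[ℂ] MonoidAlgebra ℂ primeSwapCon.Quotient :=
  FreeAlgebra.lift ℂ fun b =>
    MonoidAlgebra.of ℂ primeSwapCon.Quotient (primeSwapCon.mk' (FreeMonoid.of b))

theorem toQuot_toA (w : Word) :
    toQuot (toA w) =
      MonoidAlgebra.of ℂ primeSwapCon.Quotient (primeSwapCon.mk' (FreeMonoid.ofList w)) := by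
  induction w with
  | nil => simp [toA, MonoidAlgebra.one_def]
  | cons b t ih =>
    have h : toA (b :: t) = FreeAlgebra.ι ℂ b * toA t := by simp [toA]
    rw [h, map_mul, ih, FreeMonoid.ofList_cons, map_mul, map_mul]
    congr 1
    simp [toQuot]

theorem toA_append (u v : Word) : toA (u ++ v) = toA u * toA v := by simp [toA]

theorem toQuot_eq_zero {x : FreeAlgebra ℂ Bool} (hx : x ∈ Jideal) : toQuot x = 0 := by
  have hle : Jideal ≤ TwoSidedIdeal.ker toQuot := by
    refine TwoSidedIdeal.span_le.2 ?_
    rintro _ ⟨F, G, -, -, hF, hG, rfl⟩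
    rw [SetLike.mem_coe, TwoSidedIdeal.mem_ker, ← toA_append, ← toA_append, map_sub, toQuot_toA,
      toQuot_toA, sub_eq_zero]
    congr 1
    exact (Con.eq _).2 (balanced_comm F G hF hG)
  exact (TwoSidedIdeal.mem_ker toQuot).1 (hle hx)

theorem WEquiv.of_primeSwap {X Y : Word} (h : PrimeSwap X Y) : WEquiv X Y := by
  obtain ⟨U, D, hU, hD, W₁, W₂, h⟩ := h
  have key : ∀ F G : Word, F ≠ [] → G ≠ [] → BalancedWord F → BalancedWord G →
      WEquiv (W₁ ++ F ++ G ++ W₂) (W₁ ++ G ++ F ++ W₂) := by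
    intro F G hF0 hG0 hF hG
    have hm : toA F * toA G - toA G * toA F ∈ Jideal :=
      TwoSidedIdeal.subset_span ⟨F, G, hF0, hG0, hF, hG, rfl⟩
    have := Jideal.mul_mem_right _ (toA W₂) (Jideal.mul_mem_left (toA W₁) _ hm)
    unfold WEquiv
    convert this using 1
    simp only [toA_append]
    noncomm_ring
  rcases h with ⟨rfl, rfl⟩ | ⟨rfl, rfl⟩
  · exact key U D hU.1.1 hD.1.1 hU.1.2.1 hD.1.2.1
  · exact key D U hD.1.1 hU.1.1 hD.1.2.1 hU.1.2.1

/-- `X ∼ Y` iff there is a sequence of swaps between `X` and `Y`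
in which every swap is of type `(U, D)` with `U` an upper prime and `D` a
lower prime. -/
theorem stmt11 (X Y : Word) :
    WEquiv X Y ↔
      Relation.ReflTransGen
        (fun Z₁ Z₂ => ∃ U D : Word, UpperPrime U ∧ LowerPrime D ∧
          SwapOfType U D Z₁ Z₂) X Y := by
  constructor
  · intro h
    have h0 := toQuot_eq_zero h
    rw [map_sub, sub_eq_zero, toQuot_toA, toQuot_toA] at h0
    exact (Con.eq primeSwapCon).1 (MonoidAlgebra.of_injective h0)
  · intro h
    induction h with
    | refl => simp [WEquiv, Jideal.zero_mem]
    | tail _ hs ih =>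
      have := Jideal.add_mem ih (WEquiv.of_primeSwap hs)
      simpa [WEquiv] using this
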